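/- arXiv:1105.1605 — 2 statements merged into one kernel-verified Lean document; each statement's English description precedes it below -/
import Mathlib

section
/- Let (X, d) be a non-Archimedean metric space and let B₁, B₂ be two balls in X. Then their Hausdorff distance satisfies: d_H(B₁, B₂) = dist(B₁, B₂) if B₁ ∩ B₂ = ∅; d_H(B₁, B₂) = max{diam(B₁), diam(B₂)} if B₁ ∩ B₂ ≠ ∅ and B₁ ≠ B₂; and d_H(B₁, B₂) = 0 if B₁ = B₂. In particular, d_H(B₁, B₂) ≥ max{diam(B₁), diam(B₂)} whenever B₁ ≠ B₂. Moreover, for any non-empty subsets A₁ ⊆ B₁ and A₂ ⊆ B₂, if B₁ ∩ B₂ = ∅ then d_H(A₁, A₂) = d_H(B₁, B₂). -/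
open scoped ENNReal

/-- A ball in a metric space: an open or closed ball of positive radius. -/
def IsBall {X : Type*} [MetricSpace X] (B : Set X) : Prop :=
  ∃ (a : X) (r : ℝ), 0 < r ∧ (B = Metric.ball a r ∨ B = Metric.closedBall a r)

/-- The distance between two subsets: `inf { d(x,y) : x ∈ A, y ∈ B }`. -/
noncomputable def setEDist {X : Type*} [MetricSpace X] (A B : Set X) : ℝ≥0∞ :=
  ⨅ x ∈ A, ⨅ y ∈ B, edist x y

theorem IsBall.nonempty' {X : Type*} [MetricSpace X] {B : Set X} (h : IsBall B) : B.Nonempty := by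
  obtain ⟨a, r, hr, rfl | rfl⟩ := h
  · exact ⟨a, Metric.mem_ball_self hr⟩
  · exact ⟨a, Metric.mem_closedBall_self hr.le⟩

theorem IsBall.edist_lt' {X : Type*} [MetricSpace X]
    (hna : ∀ x y z : X, dist x z ≤ max (dist x y) (dist y z))
    {B : Set X} (h : IsBall B) {x y z : X} (hx : x ∈ B) (hy : y ∈ B) (hz : z ∉ B) :
    edist x y < edist x z := by
  rw [edist_dist, edist_dist]
  suffices hd : dist x y < dist x z by
    exact (ENNReal.ofReal_lt_ofReal_iff (dist_nonneg.trans_lt hd)).2 hd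
  obtain ⟨a, r, hr, rfl | rfl⟩ := h
  · simp only [Metric.mem_ball, not_lt] at hx hy hz
    have h1 := hna x a y
    have h2 := hna z x a
    rw [dist_comm a y] at h1
    rw [dist_comm z x] at h2
    rcases le_max_iff.1 h1 with h1 | h1 <;> rcases le_max_iff.1 h2 with h2 | h2 <;> linarith
  · simp only [Metric.mem_closedBall, not_le] at hx hy hz
    have h1 := hna x a y
    have h2 := hna z x a
    rw [dist_comm a y] at h1
    rw [dist_comm z x] at h2
    rcases le_max_iff.1 h1 with h1 | h1 <;> rcases le_max_iff.1 h2 with h2 | h2 <;> linarith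

theorem edist_ultra' {X : Type*} [MetricSpace X]
    (hna : ∀ x y z : X, dist x z ≤ max (dist x y) (dist y z)) (x y z : X) :
    edist x z ≤ max (edist x y) (edist y z) := by
  simp only [edist_dist]
  rcases le_max_iff.1 (hna x y z) with h | h
  · exact le_max_of_le_left (ENNReal.ofReal_le_ofReal h)
  · exact le_max_of_le_right (ENNReal.ofReal_le_ofReal h)

/-- Sets at constant mutual distance `c` have Hausdorff distance `c`. -/
theorem hausdorff_const' {X : Type*} [MetricSpace X] {A B : Set X} {c : ℝ≥0∞}
    (hA : A.Nonempty) (hB : B.Nonempty) (h : ∀ x ∈ A, ∀ y ∈ B, edist x y = c) :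
    Metric.hausdorffEDist A B = c := by
  obtain ⟨a, ha⟩ := hA
  obtain ⟨b, hb⟩ := hB
  apply le_antisymm
  · apply Metric.hausdorffEDist_le_of_mem_edist
    · exact fun x hx => ⟨b, hb, (h x hx b hb).le⟩
    · exact fun y hy => ⟨a, ha, by rw [edist_comm]; exact (h a ha y hy).le⟩
  · refine le_trans ?_ (Metric.infEDist_le_hausdorffEDist_of_mem ha)
    exact Metric.le_infEDist.2 fun y hy => (h a ha y hy).ge

theorem disjoint_const' {X : Type*} [MetricSpace X]
    (hna : ∀ x y z : X, dist x z ≤ max (dist x y) (dist y z))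
    {B₁ B₂ : Set X} (h₁ : IsBall B₁) (h₂ : IsBall B₂) (hd : B₁ ∩ B₂ = ∅) :
    ∃ c, ∀ x ∈ B₁, ∀ y ∈ B₂, edist x y = c := by
  have n1 : ∀ y ∈ B₂, y ∉ B₁ := fun y hy hy' => by
    have : y ∈ B₁ ∩ B₂ := ⟨hy', hy⟩
    simp [hd] at this
  have n2 : ∀ y ∈ B₁, y ∉ B₂ := fun y hy hy' => n1 y hy' hy
  have key : ∀ x ∈ B₁, ∀ x' ∈ B₁, ∀ y ∈ B₂, ∀ y' ∈ B₂, edist x' y' ≤ edist x y := by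
    intro x hx x' hx' y hy y' hy'
    refine (edist_ultra' hna x' x y').trans (max_le ?_ ?_)
    · rw [edist_comm]; exact (h₁.edist_lt' hna hx hx' (n1 y hy)).le
    · refine (edist_ultra' hna x y y').trans (max_le le_rfl ?_)
      rw [edist_comm x y]; exact (h₂.edist_lt' hna hy hy' (n2 x hx)).le
  obtain ⟨a, ha⟩ := h₁.nonempty'
  obtain ⟨b, hb⟩ := h₂.nonempty'
  exact ⟨edist a b, fun x hx y hy => le_antisymm (key a ha x hx b hb y hy) (key x hx a ha y hy b hb)⟩

theorem nested' {X : Type*} [MetricSpace X]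
    (hna : ∀ x y z : X, dist x z ≤ max (dist x y) (dist y z))
    {B₁ B₂ : Set X} (h₁ : IsBall B₁) (hs : B₁ ⊆ B₂) (hne : B₁ ≠ B₂) :
    Metric.hausdorffEDist B₁ B₂ = max (Metric.ediam B₁) (Metric.ediam B₂) := by
  rw [max_eq_right (Metric.ediam_mono hs)]
  obtain ⟨b, hb⟩ := h₁.nonempty'
  obtain ⟨v, hv, hv'⟩ : ∃ v ∈ B₂, v ∉ B₁ := by
    by_contra hcon
    push Not at hcon
    exact hne (hs.antisymm hcon)
  have out : ∀ z ∈ B₂, z ∉ B₁ → ∀ x ∈ B₁, edist x z ≤ Metric.hausdorffEDist B₁ B₂ := by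
    intro z hz hz' x hx
    rw [Metric.hausdorffEDist_comm]
    refine le_trans ?_ (Metric.infEDist_le_hausdorffEDist_of_mem hz)
    refine Metric.le_infEDist.2 fun y hy => ?_
    refine (edist_ultra' hna x y z).trans (max_le ?_ ?_)
    · rw [edist_comm x y, edist_comm z y]; exact (h₁.edist_lt' hna hy hx hz').le
    · rw [edist_comm]
  have all : ∀ z ∈ B₂, edist b z ≤ Metric.hausdorffEDist B₁ B₂ := by
    intro z hz
    by_cases hz' : z ∈ B₁
    · exact (h₁.edist_lt' hna hb hz' hv').le.trans (out v hv hv' b hb)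
    · exact out z hz hz' b hb
  apply le_antisymm
  · apply Metric.hausdorffEDist_le_of_mem_edist
    · exact fun x hx => ⟨x, hs hx, by simp⟩
    · exact fun y hy => ⟨b, hb, Metric.edist_le_ediam_of_mem hy (hs hb)⟩
  · refine Metric.ediam_le fun x hx y hy => ?_
    refine (edist_ultra' hna x b y).trans (max_le ?_ (all y hy))
    rw [edist_comm]; exact all x hx

theorem stmt_0 {X : Type*} [MetricSpace X]
    (hna : ∀ x y z : X, dist x z ≤ max (dist x y) (dist y z))
    (B₁ B₂ : Set X) (h₁ : IsBall B₁) (h₂ : IsBall B₂) :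
    (B₁ ∩ B₂ = ∅ → EMetric.hausdorffEdist B₁ B₂ = setEDist B₁ B₂) ∧
    (B₁ ∩ B₂ ≠ ∅ → B₁ ≠ B₂ →
      EMetric.hausdorffEdist B₁ B₂ = max (EMetric.diam B₁) (EMetric.diam B₂)) ∧
    (B₁ = B₂ → EMetric.hausdorffEdist B₁ B₂ = 0) ∧
    (B₁ ≠ B₂ → max (EMetric.diam B₁) (EMetric.diam B₂) ≤ EMetric.hausdorffEdist B₁ B₂) ∧
    (∀ A₁ A₂ : Set X, A₁.Nonempty → A₂.Nonempty → A₁ ⊆ B₁ → A₂ ⊆ B₂ → B₁ ∩ B₂ = ∅ →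
      EMetric.hausdorffEdist A₁ A₂ = EMetric.hausdorffEdist B₁ B₂) := by
  change (B₁ ∩ B₂ = ∅ → Metric.hausdorffEDist B₁ B₂ = setEDist B₁ B₂) ∧
    (B₁ ∩ B₂ ≠ ∅ → B₁ ≠ B₂ →
      Metric.hausdorffEDist B₁ B₂ = max (Metric.ediam B₁) (Metric.ediam B₂)) ∧
    (B₁ = B₂ → Metric.hausdorffEDist B₁ B₂ = 0) ∧
    (B₁ ≠ B₂ → max (Metric.ediam B₁) (Metric.ediam B₂) ≤ Metric.hausdorffEDist B₁ B₂) ∧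
    (∀ A₁ A₂ : Set X, A₁.Nonempty → A₂.Nonempty → A₁ ⊆ B₁ → A₂ ⊆ B₂ → B₁ ∩ B₂ = ∅ →
      Metric.hausdorffEDist A₁ A₂ = Metric.hausdorffEDist B₁ B₂)
  have ne₁ := h₁.nonempty'
  have ne₂ := h₂.nonempty'
  have two : B₁ ∩ B₂ ≠ ∅ → B₁ ≠ B₂ →
      Metric.hausdorffEDist B₁ B₂ = max (Metric.ediam B₁) (Metric.ediam B₂) := by
    intro hi hne
    obtain ⟨x, hx1, hx2⟩ := Set.nonempty_iff_ne_empty.2 hi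
    by_cases hs : B₁ ⊆ B₂
    · exact nested' hna h₁ hs hne
    · have hs' : B₂ ⊆ B₁ := by
        intro v hv
        by_contra hv'
        obtain ⟨u, hu, hu'⟩ := Set.not_subset.1 hs
        exact lt_asymm (h₁.edist_lt' hna hx1 hu hv') (h₂.edist_lt' hna hx2 hv hu')
      rw [Metric.hausdorffEDist_comm, max_comm]
      exact nested' hna h₂ hs' hne.symm
  refine ⟨?_, two, ?_, ?_, ?_⟩
  · intro hd
    obtain ⟨c, hc⟩ := disjoint_const' hna h₁ h₂ hd
    rw [hausdorff_const' ne₁ ne₂ hc]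
    obtain ⟨a, ha⟩ := ne₁
    obtain ⟨b, hb⟩ := ne₂
    unfold setEDist
    apply le_antisymm
    · exact le_iInf₂ fun x hx => le_iInf₂ fun y hy => (hc x hx y hy).ge
    · exact (iInf₂_le a ha).trans ((iInf₂_le b hb).trans (hc a ha b hb).le)
  · rintro rfl
    exact Metric.hausdorffEDist_self
  · intro hne
    by_cases hd : B₁ ∩ B₂ = ∅
    · obtain ⟨c, hc⟩ := disjoint_const' hna h₁ h₂ hd
      rw [hausdorff_const' ne₁ ne₂ hc]
      obtain ⟨a, ha⟩ := ne₁
      obtain ⟨b, hb⟩ := ne₂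
      refine max_le (Metric.ediam_le fun x hx y hy => ?_) (Metric.ediam_le fun x hx y hy => ?_)
      · rw [← hc x hx b hb]
        refine (h₁.edist_lt' hna hx hy fun hb' => ?_).le
        exact Set.notMem_empty b (hd ▸ ⟨hb', hb⟩)
      · rw [← hc a ha x hx, edist_comm a x]
        refine (h₂.edist_lt' hna hx hy fun ha' => ?_).le
        exact Set.notMem_empty a (hd ▸ ⟨ha, ha'⟩)
    · exact (two hd hne).ge
  · intro A₁ A₂ n₁ n₂ s₁ s₂ hd
    obtain ⟨c, hc⟩ := disjoint_const' hna h₁ h₂ hd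
    rw [hausdorff_const' ne₁ ne₂ hc]
    exact hausdorff_const' n₁ n₂ fun x hx y hy => hc x (s₁ hx) y (s₂ hy)
end

section
/- Let (X, d) be a compact non-Archimedean metric space. Let M♭(X) denote the collection of all balls in X and M̄♭(X) = M♭(X) ∪ {{x} : x ∈ X}, regarded as a metric space under the Hausdorff distance d_H. Then (M̄♭(X), d_H) is compact. -/
open scoped ENNReal

/-- `M♭(X)`: the collection of all balls of `X`, inside the space of closed subsets of `X`. -/
def MBall (X : Type*) [MetricSpace X] : Set (TopologicalSpace.Closeds X) :=
  {C | IsBall (C : Set X)}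

/-- `M̄♭(X) = M♭(X) ∪ {{x} : x ∈ X}`, inside the space of closed subsets of `X`
(with the Hausdorff distance as the (e)metric). -/
def MBallBar (X : Type*) [MetricSpace X] : Set (TopologicalSpace.Closeds X) :=
  {C | IsBall (C : Set X) ∨ ∃ x : X, (C : Set X) = {x}}

theorem stmt_7 {X : Type*} [MetricSpace X] [CompactSpace X]
    (hna : ∀ x y z : X, dist x z ≤ max (dist x y) (dist y z)) :
    CompactSpace (MBallBar X) := by
  have key : ∀ C : TopologicalSpace.Closeds X, C ∈ MBallBar X →
      ((C : Set X).Nonempty ∧ ∀ x ∈ (C : Set X), ∀ y ∈ (C : Set X), ∀ z : X,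
        dist x z ≤ dist x y → z ∈ (C : Set X)) := by
    rintro C (⟨a, r, hr, h | h⟩ | ⟨a, h⟩)
    · rw [h]
      refine ⟨⟨a, Metric.mem_ball_self hr⟩, fun x hx y hy z hz => ?_⟩
      rw [Metric.mem_ball] at *
      have h1 := hna z x a
      have h2 := hna x a y
      rw [dist_comm z x] at h1
      rw [dist_comm a y] at h2
      exact h1.trans_lt (max_lt (hz.trans_lt (h2.trans_lt (max_lt hx hy))) hx)
    · rw [h]
      refine ⟨⟨a, Metric.mem_closedBall_self hr.le⟩, fun x hx y hy z hz => ?_⟩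
      rw [Metric.mem_closedBall] at *
      have h1 := hna z x a
      have h2 := hna x a y
      rw [dist_comm z x] at h1
      rw [dist_comm a y] at h2
      exact h1.trans (max_le (hz.trans (h2.trans (max_le hx hy))) hx)
    · rw [h]
      refine ⟨⟨a, rfl⟩, ?_⟩
      rintro x rfl y rfl z hz
      rw [dist_self] at hz
      exact (dist_le_zero.1 hz).symm
  refine isCompact_iff_compactSpace.1 (IsClosed.isCompact ?_)
  refine isClosed_of_closure_subset fun C hC => ?_
  rw [Metric.mem_closure_iff_infEDist_zero, ← nonpos_iff_eq_zero] at hC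
  have app : ∀ ε : ℝ, 0 < ε → ∃ B ∈ MBallBar X,
      Metric.hausdorffEDist (C : Set X) B < ENNReal.ofReal ε := by
    intro ε hε
    exact Metric.infEDist_lt_iff.1 (hC.trans_lt (ENNReal.ofReal_pos.2 hε))
  have close : ∀ (ε : ℝ) (s t : Set X), Metric.hausdorffEDist s t < ENNReal.ofReal ε →
      ∀ x ∈ s, ∃ y ∈ t, dist x y < ε := by
    intro ε s t h x hx
    obtain ⟨y, hy, hxy⟩ := Metric.exists_edist_lt_of_hausdorffEDist_lt hx h
    exact ⟨y, hy, edist_lt_ofReal.1 hxy⟩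
  have hne : (C : Set X).Nonempty := by
    obtain ⟨B, hB, hd⟩ := app 1 one_pos
    obtain ⟨b, hb⟩ := (key B hB).1
    rw [Metric.hausdorffEDist_comm] at hd
    obtain ⟨y, hy, -⟩ := close _ _ _ hd b hb
    exact ⟨y, hy⟩
  have hP : ∀ x ∈ (C : Set X), ∀ y ∈ (C : Set X), ∀ z : X,
        dist x z ≤ dist x y → z ∈ (C : Set X) := by
    intro x hx y hy z hz
    rcases eq_or_ne x y with rfl | hxy
    · rw [dist_self] at hz
      rwa [← dist_le_zero.1 hz]
    have hr : 0 < dist x y := dist_pos.2 hxy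
    rw [← C.isClosed.closure_eq, Metric.mem_closure_iff]
    intro ε hε
    obtain ⟨B, hB, hd⟩ := app (min ε (dist x y)) (lt_min hε hr)
    obtain ⟨x', hx', hxx⟩ := close _ _ _ hd x hx
    obtain ⟨y', hy', hyy⟩ := close _ _ _ hd y hy
    have hxx2 := hxx.trans_le (min_le_right _ _)
    have hyy2 := hyy.trans_le (min_le_right _ _)
    have h1 : dist x y ≤ dist x' y' := by
      have a1 := hna x x' y
      have a2 := hna x' y' y
      rw [dist_comm y' y] at a2
      grind
    have h2 : dist x' z ≤ dist x y := by
      have a1 := hna x' x z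
      rw [dist_comm x' x] at a1
      grind
    have hzB := (key B hB).2 x' hx' y' hy' z (h2.trans h1)
    rw [Metric.hausdorffEDist_comm] at hd
    obtain ⟨c, hc, hzc⟩ := close _ _ _ hd z hzB
    exact ⟨c, hc, hzc.trans_le (min_le_left _ _)⟩
  obtain ⟨a, ha⟩ := hne
  obtain ⟨b, hb, hmax⟩ := C.isClosed.isCompact.exists_isMaxOn ⟨a, ha⟩
    (f := fun y => dist a y) (by fun_prop)
  have hC' : (C : Set X) = Metric.closedBall a (dist a b) := by
    ext z
    rw [Metric.mem_closedBall, dist_comm z a]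
    exact ⟨fun hz => hmax hz, fun hz => hP a ha b hb z hz⟩
  rcases eq_or_ne a b with rfl | hab
  · right
    exact ⟨a, by rw [hC']; simp⟩
  · left
    exact ⟨a, _, dist_pos.2 hab, Or.inr hC'⟩
end
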